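/- Let α > −1 be real, n ≥ 1 an integer, c ∈ ℝ, and σ < 0. If u : (0,∞) → ℂ is twice continuously differentiable, satisfies the ODE x² u''(x) − αn · x u'(x) + (cαn(αn + α + 2) + σ x^{2(1+α)}) u(x) = 0 for all x > 0, and ∫₀^∞ |u(x)|² x^{−(4+αn)} dx < ∞, then u is identically zero. (That is, the Fourier-transformed normal operator of x²(Δ − cS) on the α-Grushin model is injective on x^{2+αn/2} L²((0,∞), dx) for all such parameters.) -/

import Mathlib

open MeasureTheory Complex Real Set

noncomputable section

/-!
In the variable `t = log x` the function `w t = x ^ (-(1 + α n) / 2) * u x` solves `w'' = q w`,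
where `q` is increasing, bounded below and tends to `∞` at `∞`; moreover `‖w‖ ^ 2` is integrable at
`-∞` and `‖w‖ ^ 2 * exp (-k t)` at `∞`, with `k = 2`. The energy `q ‖w‖ ^ 2 - ‖w'‖ ^ 2` is
nondecreasing. Were it negative somewhere, it would stay below a negative constant towards `-∞`, and
integrability of `‖w‖ ^ 2` would force `(‖w‖ ^ 2)' → -∞` there, which is absurd. Hence
`(‖w‖ ^ 2)'' = 2 (‖w'‖ ^ 2 + q ‖w‖ ^ 2) ≥ 0`, and a convex function integrable at `-∞` is
nondecreasing. If `w` is not zero, then `(‖w‖ ^ 2)'' ≥ 2 q ‖w‖ ^ 2` makes `‖w‖ ^ 2` grow at least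
like `exp (k t)`, contradicting integrability at `∞`.
-/

open Filter Topology
open scoped RealInnerProductSpace

section Integrability

theorem not_integrableAtFilter_of_eventually_ge {X : Type*} [MeasurableSpace X] {μ : Measure X}
    {l : Filter X} (hl : ∀ s ∈ l, μ s = ⊤) {f : X → ℝ} {c : ℝ} (hc : 0 < c)
    (hf : ∀ᶠ x in l, c ≤ f x) : ¬ IntegrableAtFilter f l μ := by
  rintro ⟨s, hs, hfs⟩
  have hlt : μ (s ∩ {x | c ≤ f x}) < ⊤ := by
    rw [inter_comm]
    exact (μ.le_restrict_apply s _).trans_lt (hfs.measure_ge_lt_top hc)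
  exact hlt.ne (hl _ (inter_mem hs hf))

theorem volume_eq_top_of_mem_atBot {s : Set ℝ} (hs : s ∈ atBot) : volume s = ⊤ := by
  obtain ⟨a, ha⟩ := mem_atBot_sets.1 hs
  exact measure_mono_top (show Iic a ⊆ s from ha) Real.volume_Iic

theorem volume_eq_top_of_mem_atTop {s : Set ℝ} (hs : s ∈ atTop) : volume s = ⊤ := by
  obtain ⟨a, ha⟩ := mem_atTop_sets.1 hs
  exact measure_mono_top (show Ici a ⊆ s from ha) Real.volume_Ici

theorem integrableOn_Ioi_iff_integrable_exp_smul_comp_exp {F : Type*} [NormedAddCommGroup F]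
    [NormedSpace ℝ F] (f : ℝ → F) :
    IntegrableOn f (Ioi 0) ↔ Integrable fun t => rexp t • f (rexp t) := by
  simpa only [image_univ, Real.range_exp, abs_of_pos (Real.exp_pos _), integrableOn_univ] using
    integrableOn_image_iff_integrableOn_abs_deriv_smul MeasurableSet.univ
      (fun t _ => (Real.hasDerivAt_exp t).hasDerivWithinAt) Real.exp_injective.injOn f

theorem integrableAtFilter_atBot_of_integrable_mul_exp_neg {f : ℝ → ℝ} {k : ℝ} (hk : 0 ≤ k)
    (hint : Integrable fun t => f t * rexp (-k * t)) : IntegrableAtFilter f atBot := by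
  have exp_le_one : ∀ᵐ t ∂volume.restrict (Iic 0), ‖rexp (k * t)‖ ≤ 1 := by
    filter_upwards [ae_restrict_mem measurableSet_Iic] with t (ht : t ≤ 0)
    rw [Real.norm_of_nonneg (Real.exp_pos _).le]
    exact Real.exp_le_one_iff.2 (mul_nonpos_of_nonneg_of_nonpos hk ht)
  have hint_mul := hint.integrableOn.mul_bdd (by fun_prop) exp_le_one
  refine ⟨Iic 0, Iic_mem_atBot 0, hint_mul.congr (.of_forall fun t => ?_)⟩
  simp [mul_assoc, ← Real.exp_add]

end Integrability

section DifferentialInequalities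

variable {f f' f'' : ℝ → ℝ}

theorem not_integrableAtFilter_atBot_of_deriv_le_neg (hf : ∀ t, HasDerivAt f (f' t) t) {δ : ℝ}
    (hδ : 0 < δ) (h : ∀ᶠ t in atBot, f' t ≤ -δ) : ¬ IntegrableAtFilter f atBot := by
  obtain ⟨a, ha⟩ := eventually_atBot.1 h
  have linear_le : ∀ᶠ t in atBot, f a + δ * (a - t) ≤ f t := by
    filter_upwards [Iic_mem_atBot a] with t (ht : t ≤ a)
    have mean_value := (convex_Iic a).image_sub_le_mul_sub_of_deriv_le (f := f) (C := -δ)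
      (fun s _ => (hf s).continuousAt.continuousWithinAt)
      (fun s _ => (hf s).differentiableAt.differentiableWithinAt)
      (fun s hs => (hf s).deriv.trans_le (ha s (interior_subset (s := Iic a) hs)))
      t ht a self_mem_Iic ht
    linarith
  have tendsto_linear : Tendsto (fun t => f a + δ * (a - t)) atBot atTop :=
    tendsto_atTop_add_const_left _ _ <|
      (tendsto_atTop_add_const_left _ a tendsto_neg_atBot_atTop).const_mul_atTop hδ
  exact not_integrableAtFilter_of_eventually_ge (fun _ => volume_eq_top_of_mem_atBot) one_pos
    ((tendsto_atTop_mono' _ linear_le tendsto_linear).eventually_ge_atTop 1)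

theorem deriv_nonneg_of_integrableAtFilter_atBot (hf : ∀ t, HasDerivAt f (f' t) t)
    (hf' : Monotone f') (hint : IntegrableAtFilter f atBot) (t : ℝ) : 0 ≤ f' t := by
  by_contra! hneg
  refine not_integrableAtFilter_atBot_of_deriv_le_neg hf (neg_pos.2 hneg) ?_ hint
  filter_upwards [Iic_mem_atBot t] with s hs
  simpa using hf' hs

theorem not_integrableAtFilter_atBot_of_sub_mul_le_second_deriv
    (hf : ∀ t, HasDerivAt f (f' t) t) (hf' : ∀ t, HasDerivAt f' (f'' t) t) {ε C a : ℝ}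
    (hε : 0 < ε) (h : ∀ t ≤ a, ε - C * f t ≤ f'' t) : ¬ IntegrableAtFilter f atBot := by
  intro hint
  have f_cont : Continuous f := continuous_iff_continuousAt.2 fun t => (hf t).continuousAt
  have f'_le : ∀ᶠ t in atBot, f' t ≤ f' a + C * (∫ s in t..a, f s) + ε * (t - a) := by
    filter_upwards [Iic_mem_atBot a] with t (ht : t ≤ a)
    have integral_le : ∫ s in t..a, (ε - C * f s) ≤ f' a - f' t :=
      intervalIntegral.integral_le_sub_of_hasDeriv_right_of_le ht
        (fun s _ => (hf' s).continuousAt.continuousWithinAt)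
        (fun s _ => (hf' s).hasDerivWithinAt)
        (by fun_prop : Continuous fun s => ε - C * f s).integrableOn_Icc
        (fun s hs => h s hs.2.le)
    rw [intervalIntegral.integral_sub intervalIntegrable_const
      ((by fun_prop : Continuous fun s => C * f s).intervalIntegrable t a),
      intervalIntegral.integral_const, intervalIntegral.integral_const_mul, smul_eq_mul]
      at integral_le
    linarith
  have tendsto_integral : Tendsto (fun t => ∫ s in t..a, f s) atBot (𝓝 (∫ s in Iic a, f s)) :=
    intervalIntegral_tendsto_integral_Iic a
      (integrableOn_Iic_iff_integrableAtFilter_atBot.2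
        ⟨hint, f_cont.locallyIntegrable.locallyIntegrableOn _⟩) tendsto_id
  have tendsto_f' : Tendsto f' atBot atBot :=
    tendsto_atBot_mono' _ f'_le <| ((tendsto_integral.const_mul C).const_add (f' a)).add_atBot <|
      (tendsto_atBot_add_const_right _ (-a) tendsto_id).const_mul_atBot hε
  exact not_integrableAtFilter_atBot_of_deriv_le_neg hf one_pos
    (tendsto_f'.eventually_le_atBot (-1)) hint

theorem mul_exp_le_of_mul_le_deriv (hf : ∀ t, HasDerivAt f (f' t) t) {κ a : ℝ}
    (h : ∀ t, a ≤ t → κ * f t ≤ f' t) {t : ℝ} (ht : a ≤ t) :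
    f a * rexp (κ * (t - a)) ≤ f t := by
  have hderiv (s : ℝ) : HasDerivAt (fun s => f s * rexp (-κ * (s - a)))
      ((f' s - κ * f s) * rexp (-κ * (s - a))) s := by
    refine ((hf s).fun_mul (((hasDerivAt_id s).sub_const a).const_mul (-κ)).exp).congr_deriv ?_
    simp only [id]
    ring
  have mono : MonotoneOn (fun s => f s * rexp (-κ * (s - a))) (Ici a) :=
    monotoneOn_of_hasDerivWithinAt_nonneg (convex_Ici a)
      (fun s _ => (hderiv s).continuousAt.continuousWithinAt)
      (fun s _ => (hderiv s).hasDerivWithinAt)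
      (fun s hs => mul_nonneg (sub_nonneg.2 (h s (interior_subset hs))) (Real.exp_pos _).le)
  calc f a * rexp (κ * (t - a))
      = f a * rexp (-κ * (a - a)) * rexp (κ * (t - a)) := by simp
    _ ≤ f t * rexp (-κ * (t - a)) * rexp (κ * (t - a)) :=
        mul_le_mul_of_nonneg_right (mono self_mem_Ici ht ht) (Real.exp_pos _).le
    _ = f t := by rw [mul_assoc, ← Real.exp_add]; simp

theorem half_mul_exp_le_of_sq_mul_le_second_deriv (hf : ∀ t, HasDerivAt f (f' t) t)
    (hf' : ∀ t, HasDerivAt f' (f'' t) t) {κ a : ℝ} (hfa : 0 ≤ f a) (hf'a : 0 ≤ f' a)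
    (h : ∀ t, a ≤ t → κ ^ 2 * f t ≤ f'' t) {t : ℝ} (ht : a ≤ t) :
    f a / 2 * rexp (κ * (t - a)) ≤ f t := by
  -- Factor `D ^ 2 - κ ^ 2 = (D - κ) (D + κ)` and integrate one factor at a time.
  have first_order {s : ℝ} (hs : a ≤ s) : κ * f a * rexp (κ * (s - a)) ≤ f' s + κ * f s :=
    calc κ * f a * rexp (κ * (s - a))
        ≤ (f' a + κ * f a) * rexp (κ * (s - a)) := by gcongr; linarith
      _ ≤ f' s + κ * f s :=
        mul_exp_le_of_mul_le_deriv (fun r => (hf' r).fun_add ((hf r).const_mul κ))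
          (fun r hr => by linear_combination h r hr) hs
  have hderiv (s : ℝ) : HasDerivAt (fun s => f s - f a / 2 * rexp (κ * (s - a)))
      (f' s - f a / 2 * (rexp (κ * (s - a)) * (κ * 1))) s :=
    (hf s).sub ((((hasDerivAt_id s).sub_const a).const_mul κ).exp.const_mul _)
  have remainder_ge := mul_exp_le_of_mul_le_deriv (κ := -κ) hderiv
    (fun s hs => by linear_combination first_order hs) ht
  have start_nonneg : 0 ≤ f a - f a / 2 * rexp (κ * (a - a)) := by
    simpa using half_le_self hfa
  exact sub_nonneg.1 ((mul_nonneg start_nonneg (Real.exp_pos _).le).trans remainder_ge)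

end DifferentialInequalities

section SchrodingerEquation

variable {E : Type*} [NormedAddCommGroup E] [NormedSpace ℝ E]

/-- `w` solves the one-dimensional Schrödinger equation `w'' = q w` on the whole line. The
derivative `w'` is carried as a separate function so that no `deriv` of a derivative occurs. -/
structure IsSchrodingerSolution (q : ℝ → ℝ) (w w' : ℝ → E) : Prop where
  hasDerivAt : ∀ t, HasDerivAt w (w' t) t
  hasDerivAt_deriv : ∀ t, HasDerivAt w' (q t • w t) t

theorem isSchrodingerSolution_exp_smul_comp_exp {b : ℝ} {V : ℝ → ℝ} {u u' u'' : ℝ → E}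
    (hu : ∀ x ∈ Ioi (0 : ℝ), HasDerivAt u (u' x) x)
    (hu' : ∀ x ∈ Ioi (0 : ℝ), HasDerivAt u' (u'' x) x)
    (hode : ∀ x ∈ Ioi (0 : ℝ), x ^ 2 • u'' x - ((2 * b - 1) * x) • u' x + V x • u x = 0) :
    IsSchrodingerSolution (fun t => b ^ 2 - V (rexp t)) (fun t => rexp (-b * t) • u (rexp t))
      (fun t => rexp (-b * t) • (rexp t • u' (rexp t) - b • u (rexp t))) := by
  have hexp (t : ℝ) : HasDerivAt (fun t => rexp (-b * t)) (rexp (-b * t) * (-b * 1)) t :=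
    ((hasDerivAt_id t).const_mul (-b)).exp
  have hu_exp (t : ℝ) : HasDerivAt (fun t => u (rexp t)) (rexp t • u' (rexp t)) t :=
    (hu _ (Real.exp_pos t)).scomp t (Real.hasDerivAt_exp t)
  have hu'_exp (t : ℝ) : HasDerivAt (fun t => u' (rexp t)) (rexp t • u'' (rexp t)) t :=
    (hu' _ (Real.exp_pos t)).scomp t (Real.hasDerivAt_exp t)
  constructor <;> intro t
  · refine ((hexp t).fun_smul (hu_exp t)).congr_deriv ?_
    module
  · refine ((hexp t).fun_smul (((Real.hasDerivAt_exp t).fun_smul (hu'_exp t)).fun_sub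
      ((hu_exp t).fun_const_smul b))).congr_deriv ?_
    linear_combination (norm := module) rexp (-b * t) • hode _ (Real.exp_pos t)

theorem integrable_norm_exp_smul_comp_exp_sq {u : ℝ → E} {γ : ℝ} (b : ℝ)
    (hint : IntegrableOn (fun x => ‖u x‖ ^ 2 * x ^ (-γ)) (Ioi 0)) :
    Integrable fun t => ‖rexp (-b * t) • u (rexp t)‖ ^ 2 * rexp (-(γ - 1 - 2 * b) * t) := by
  convert (integrableOn_Ioi_iff_integrable_exp_smul_comp_exp _).1 hint using 2 with t
  have exp_eq : rexp (-b * t) ^ 2 * rexp (-(γ - 1 - 2 * b) * t) = rexp t * rexp t ^ (-γ) := by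
    rw [← Real.exp_mul, ← Real.exp_nat_mul, ← Real.exp_add, ← Real.exp_add]
    ring_nf
  rw [norm_smul, Real.norm_of_nonneg (Real.exp_pos _).le, smul_eq_mul]
  linear_combination ‖u (rexp t)‖ ^ 2 * exp_eq

end SchrodingerEquation

namespace IsSchrodingerSolution

variable {E : Type*} [NormedAddCommGroup E] [InnerProductSpace ℝ E] {q : ℝ → ℝ} {w w' : ℝ → E}

theorem hasDerivAt_norm_sq (hw : IsSchrodingerSolution q w w') (t : ℝ) :
    HasDerivAt (fun t => ‖w t‖ ^ 2) (2 * ⟪w t, w' t⟫) t :=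
  (hw.hasDerivAt t).norm_sq

theorem hasDerivAt_two_mul_inner (hw : IsSchrodingerSolution q w w') (t : ℝ) :
    HasDerivAt (fun t => 2 * ⟪w t, w' t⟫) (2 * (‖w' t‖ ^ 2 + q t * ‖w t‖ ^ 2)) t := by
  refine (((hw.hasDerivAt t).inner ℝ (hw.hasDerivAt_deriv t)).const_mul 2).congr_deriv ?_
  rw [real_inner_smul_right, real_inner_self_eq_norm_sq, real_inner_self_eq_norm_sq]
  ring

theorem hasDerivAt_energy (hw : IsSchrodingerSolution q w w') (hq : Differentiable ℝ q) (t : ℝ) :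
    HasDerivAt (fun t => q t * ‖w t‖ ^ 2 - ‖w' t‖ ^ 2) (deriv q t * ‖w t‖ ^ 2) t := by
  refine (((hq t).hasDerivAt.mul (hw.hasDerivAt_norm_sq t)).sub
    (hw.hasDerivAt_deriv t).norm_sq).congr_deriv ?_
  rw [real_inner_smul_right, real_inner_comm (w t)]
  ring

theorem monotone_energy (hw : IsSchrodingerSolution q w w') (hq : Differentiable ℝ q)
    (hq_mono : Monotone q) : Monotone fun t => q t * ‖w t‖ ^ 2 - ‖w' t‖ ^ 2 :=
  monotone_of_hasDerivAt_nonneg (hw.hasDerivAt_energy hq)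
    fun _ => mul_nonneg hq_mono.deriv_nonneg (sq_nonneg _)

theorem norm_deriv_sq_le (hw : IsSchrodingerSolution q w w') (hq : Differentiable ℝ q)
    (hq_mono : Monotone q) (hq_bdd : BddBelow (range q))
    (hint : IntegrableAtFilter (fun t => ‖w t‖ ^ 2) atBot) (t : ℝ) :
    ‖w' t‖ ^ 2 ≤ q t * ‖w t‖ ^ 2 := by
  obtain ⟨m, hm⟩ := hq_bdd
  by_contra! hneg
  refine not_integrableAtFilter_atBot_of_sub_mul_le_second_deriv (a := t) (C := -4 * m)
    hw.hasDerivAt_norm_sq hw.hasDerivAt_two_mul_inner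
    (mul_pos two_pos (sub_pos.2 hneg)) (fun s hs => ?_) hint
  have energy_le : q s * ‖w s‖ ^ 2 - ‖w' s‖ ^ 2 ≤ q t * ‖w t‖ ^ 2 - ‖w' t‖ ^ 2 :=
    hw.monotone_energy hq hq_mono hs
  have potential_ge : m * ‖w s‖ ^ 2 ≤ q s * ‖w s‖ ^ 2 := by
    gcongr
    exact hm (mem_range_self s)
  linarith

theorem monotone_two_mul_inner (hw : IsSchrodingerSolution q w w') (hq : Differentiable ℝ q)
    (hq_mono : Monotone q) (hq_bdd : BddBelow (range q))
    (hint : IntegrableAtFilter (fun t => ‖w t‖ ^ 2) atBot) :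
    Monotone fun t => 2 * ⟪w t, w' t⟫ :=
  monotone_of_hasDerivAt_nonneg hw.hasDerivAt_two_mul_inner fun t => by
    have potential_nonneg : 0 ≤ q t * ‖w t‖ ^ 2 :=
      (sq_nonneg _).trans (hw.norm_deriv_sq_le hq hq_mono hq_bdd hint t)
    simp only [Pi.zero_apply]
    positivity

theorem not_integrableAtFilter_atTop (hw : IsSchrodingerSolution q w w') {k a : ℝ}
    (hqk : ∀ t, a ≤ t → k ^ 2 ≤ 2 * q t) (hwa : w a ≠ 0) (hinner : 0 ≤ ⟪w a, w' a⟫) :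
    ¬ IntegrableAtFilter (fun t => ‖w t‖ ^ 2 * rexp (-k * t)) atTop := by
  have hpos : 0 < ‖w a‖ ^ 2 / 2 * rexp (-k * a) := by positivity
  refine not_integrableAtFilter_of_eventually_ge (fun _ => volume_eq_top_of_mem_atTop) hpos ?_
  filter_upwards [Ici_mem_atTop a] with t (ht : a ≤ t)
  have convexity (s : ℝ) (hs : a ≤ s) :
      k ^ 2 * ‖w s‖ ^ 2 ≤ 2 * (‖w' s‖ ^ 2 + q s * ‖w s‖ ^ 2) := by
    nlinarith [hqk s hs, sq_nonneg ‖w s‖, sq_nonneg ‖w' s‖]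
  calc ‖w a‖ ^ 2 / 2 * rexp (-k * a)
      = ‖w a‖ ^ 2 / 2 * rexp (k * (t - a)) * rexp (-k * t) := by
        rw [mul_assoc, ← Real.exp_add]
        ring_nf
    _ ≤ ‖w t‖ ^ 2 * rexp (-k * t) := by
        gcongr
        exact half_mul_exp_le_of_sq_mul_le_second_deriv hw.hasDerivAt_norm_sq
          hw.hasDerivAt_two_mul_inner (sq_nonneg _) (mul_nonneg two_pos.le hinner) convexity ht

theorem eq_zero_of_integrable (hw : IsSchrodingerSolution q w w') (hq : Differentiable ℝ q)
    (hq_mono : Monotone q) (hq_bdd : BddBelow (range q)) (hq_top : Tendsto q atTop atTop)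
    {k : ℝ} (hk : 0 ≤ k) (hint : Integrable fun t => ‖w t‖ ^ 2 * rexp (-k * t)) (t : ℝ) :
    w t = 0 := by
  have hint_bot : IntegrableAtFilter (fun t => ‖w t‖ ^ 2) atBot :=
    integrableAtFilter_atBot_of_integrable_mul_exp_neg hk hint
  have inner_nonneg : ∀ s, 0 ≤ 2 * ⟪w s, w' s⟫ :=
    deriv_nonneg_of_integrableAtFilter_atBot hw.hasDerivAt_norm_sq
      (hw.monotone_two_mul_inner hq hq_mono hq_bdd hint_bot) hint_bot
  have norm_sq_mono : Monotone fun s => ‖w s‖ ^ 2 :=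
    monotone_of_hasDerivAt_nonneg hw.hasDerivAt_norm_sq inner_nonneg
  obtain ⟨T, hT⟩ := eventually_atTop.1 (hq_top.eventually_ge_atTop (k ^ 2 / 2))
  have zero_right (s : ℝ) (hs : T ≤ s) : w s = 0 := by
    by_contra hws
    exact hw.not_integrableAtFilter_atTop (fun r hr => by linarith [hT r (hs.trans hr)]) hws
      (by linarith [inner_nonneg s]) (hint.integrableAtFilter _)
  have norm_sq_le : ‖w t‖ ^ 2 ≤ ‖w (max t T)‖ ^ 2 := norm_sq_mono (le_max_left t T)
  rw [zero_right _ (le_max_right t T), norm_zero, zero_pow two_ne_zero] at norm_sq_le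
  simpa using norm_sq_le.antisymm (sq_nonneg _)

end IsSchrodingerSolution

section ExponentialPotential

variable (m : ℝ) {s β : ℝ}

theorem monotone_add_mul_exp_mul (hs : 0 ≤ s) (hβ : 0 ≤ β) :
    Monotone fun t => m + s * rexp (t * β) := fun _ _ h => by
  dsimp only
  gcongr

theorem bddBelow_range_add_mul_exp_mul (hs : 0 ≤ s) (β : ℝ) :
    BddBelow (range fun t => m + s * rexp (t * β)) :=
  ⟨m, forall_mem_range.2 fun _ => le_add_of_nonneg_right (mul_nonneg hs (Real.exp_pos _).le)⟩

theorem tendsto_atTop_add_mul_exp_mul (hs : 0 < s) (hβ : 0 < β) :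
    Tendsto (fun t => m + s * rexp (t * β)) atTop atTop :=
  tendsto_atTop_add_const_left _ m <|
    (Real.tendsto_exp_atTop.comp (tendsto_id.atTop_mul_const hβ)).const_mul_atTop hs

end ExponentialPotential

theorem grushin_normal_operator_injective_general {E : Type*} [NormedAddCommGroup E]
    [InnerProductSpace ℝ E] {a K β σ γ : ℝ} (hβ : 0 < β) (hσ : σ < 0)
    (hγ : 2 + a ≤ γ) {u : ℝ → E} (hu : ContDiffOn ℝ 2 u (Ioi 0))
    (hode : ∀ x ∈ Ioi (0 : ℝ),
      x ^ 2 • deriv (deriv u) x - (a * x) • deriv u x + (K + σ * x ^ (2 * β)) • u x = 0)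
    (hint : IntegrableOn (fun x => ‖u x‖ ^ 2 * x ^ (-γ)) (Ioi 0)) :
    ∀ x ∈ Ioi (0 : ℝ), u x = 0 := by
  have hu_diff : DifferentiableOn ℝ u (Ioi 0) := hu.differentiableOn two_ne_zero
  have hu'_diff : DifferentiableOn ℝ (deriv u) (Ioi 0) :=
    (hu.deriv_of_isOpen isOpen_Ioi le_rfl).differentiableOn one_ne_zero
  have schrodinger := isSchrodingerSolution_exp_smul_comp_exp (b := (1 + a) / 2)
    (V := fun x => K + σ * x ^ (2 * β))
    (fun x hx => (hu_diff.differentiableAt (Ioi_mem_nhds hx)).hasDerivAt)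
    (fun x hx => (hu'_diff.differentiableAt (Ioi_mem_nhds hx)).hasDerivAt)
    (fun x hx => by convert hode x hx using 4; ring)
  have potential_eq : (fun t => ((1 + a) / 2) ^ 2 - (K + σ * rexp t ^ (2 * β))) =
      fun t => ((1 + a) / 2) ^ 2 - K + -σ * rexp (t * (2 * β)) := by
    ext t
    rw [Real.exp_mul]
    ring
  rw [potential_eq] at schrodinger
  have weighted_eq_zero := schrodinger.eq_zero_of_integrable (by fun_prop)
    (monotone_add_mul_exp_mul _ (neg_pos.2 hσ).le (by positivity))
    (bddBelow_range_add_mul_exp_mul _ (neg_pos.2 hσ).le _)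
    (tendsto_atTop_add_mul_exp_mul _ (neg_pos.2 hσ) (by positivity))
    (by linarith) (integrable_norm_exp_smul_comp_exp_sq _ hint)
  intro x hx
  simpa [Real.exp_log hx] using weighted_eq_zero (Real.log x)

/-- For `α > −1`, `n ≥ 1`, `c ∈ ℝ` and `σ < 0`, any twice continuously
differentiable solution `u` on `(0,∞)` of
`x² u'' − αn·x u' + (cαn(αn+α+2) + σ x^{2(1+α)}) u = 0`
with `∫₀^∞ |u(x)|² x^{−(4+αn)} dx < ∞` vanishes identically; i.e. the Fourier-transformed
normal operator of `x²(Δ − cS)` is injective on `x^{2+αn/2} L²((0,∞), dx)`. -/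
theorem grushin_normal_operator_injective (α : ℝ) (hα : -1 < α) (n : ℕ) (hn : 1 ≤ n)
    (c σ : ℝ) (hσ : σ < 0) (u : ℝ → ℂ)
    (hu : ContDiffOn ℝ 2 u (Ioi 0))
    (hode : ∀ x ∈ Ioi (0 : ℝ),
      ((x ^ 2 : ℝ) : ℂ) * deriv (deriv u) x - ((α * n * x : ℝ) : ℂ) * deriv u x
        + ((c * (α * n) * (α * n + α + 2) + σ * x ^ (2 * (1 + α)) : ℝ) : ℂ) * u x = 0)
    (hint : IntegrableOn (fun x : ℝ => ‖u x‖ ^ 2 * x ^ (-(4 + α * n))) (Ioi 0)) :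
    ∀ x ∈ Ioi (0 : ℝ), u x = 0 := by
  simp only [← Complex.real_smul] at hode
  exact grushin_normal_operator_injective_general (by linarith) hσ (by linarith) hu hode hint
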